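/- Any triangulation of the graph associated with a convex polyomino is word-representable if and only if it is 3-colorable. -/

import Mathlib

/-- Two letters `x ≠ y` alternate in the word `w` if, after deleting all other letters,
consecutive letters are always distinct (i.e. the result is `xyxy...` or `yxyx...`). -/
def Alternate {V : Type*} [DecidableEq V] (w : List V) (x y : V) : Prop :=
  (w.filter (fun z => z = x ∨ z = y)).Chain' (· ≠ ·)

/-- A graph is word-representable if some word over its vertex alphabet, containing every
vertex, is such that two distinct letters alternate iff they are adjacent. -/
def WordRepresentable {V : Type*} [DecidableEq V] (G : SimpleGraph V) : Prop :=
  ∃ w : List V, (∀ v : V, v ∈ w) ∧ ∀ x y : V, x ≠ y → (Alternate w x y ↔ G.Adj x y)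

/-- Two cells of a polyomino are adjacent if they share a side. -/
def CellAdj (a b : ℤ × ℤ) : Prop :=
  (a.1 = b.1 ∧ (a.2 = b.2 + 1 ∨ b.2 = a.2 + 1)) ∨
  (a.2 = b.2 ∧ (a.1 = b.1 + 1 ∨ b.1 = a.1 + 1))

/-- A polyomino: a nonempty finite set of unit cells (a cell is named by its lower-left
corner) that is connected under side-adjacency of cells. -/
def IsPolyomino (P : Finset (ℤ × ℤ)) : Prop :=
  P.Nonempty ∧ ∀ a ∈ P, ∀ b ∈ P,
    Relation.ReflTransGen (fun c c' => c ∈ P ∧ c' ∈ P ∧ CellAdj c c') a b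

/-- A convex polyomino: a polyomino whose intersection with every horizontal line and with
every vertical line is connected. -/
def IsConvexPolyomino (P : Finset (ℤ × ℤ)) : Prop :=
  IsPolyomino P ∧
  (∀ x y₁ y₂ y : ℤ, (x, y₁) ∈ P → (x, y₂) ∈ P → y₁ ≤ y → y ≤ y₂ → (x, y) ∈ P) ∧
  (∀ y x₁ x₂ x : ℤ, (x₁, y) ∈ P → (x₂, y) ∈ P → x₁ ≤ x → x ≤ x₂ → (x, y) ∈ P)

/-- The lattice points of a polyomino: the corners of its cells. These are the vertices of
the associated graph. -/
def latticePts (P : Finset (ℤ × ℤ)) : Set (ℤ × ℤ) :=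
  {p | ∃ c ∈ P, p = c ∨ p = (c.1 + 1, c.2) ∨ p = (c.1, c.2 + 1) ∨ p = (c.1 + 1, c.2 + 1)}

/-- The edges of a triangulation of the graph associated with the polyomino `P` (before
symmetrisation): the horizontal unit segments bounding a cell of `P`, the vertical unit
segments bounding a cell of `P`, and, in each cell `c ∈ P`, the diagonal chosen by `t`
(`true` gives the diagonal `c—(c.1+1, c.2+1)`, `false` gives `(c.1+1, c.2)—(c.1, c.2+1)`). -/
def triRel (P : Finset (ℤ × ℤ)) (t : ℤ × ℤ → Bool) (p q : ℤ × ℤ) : Prop :=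
  (q = (p.1 + 1, p.2) ∧ ((p.1, p.2) ∈ P ∨ (p.1, p.2 - 1) ∈ P)) ∨
  (q = (p.1, p.2 + 1) ∧ ((p.1, p.2) ∈ P ∨ (p.1 - 1, p.2) ∈ P)) ∨
  (∃ c ∈ P, (t c = true ∧ p = c ∧ q = (c.1 + 1, c.2 + 1)) ∨
            (t c = false ∧ p = (c.1 + 1, c.2) ∧ q = (c.1, c.2 + 1)))

/-- The triangulation (determined by the choice `t` of a diagonal in each cell) of the
graph associated with the polyomino `P`, as a graph on the lattice points of `P`. -/
def polyTri (P : Finset (ℤ × ℤ)) (t : ℤ × ℤ → Bool) : SimpleGraph (latticePts P) :=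
  (SimpleGraph.fromRel (triRel P t)).induce (latticePts P)

/-!
Two letters alternate in a word exactly when the difference of their numbers of occurrences in
prefixes takes at most two consecutive values. After a shift, the counts of the neighbours of a
vertex `v` therefore stay within one below the count of `v`, and two neighbours alternate iff their
shifted counts are pointwise comparable: neighbourhoods in a word-representable graph are
comparability graphs. A triangulated polyomino has no `K₄`, so its neighbourhoods are triangle-free
comparability graphs, hence bipartite.

A sign colouring of the neighbours of the corner shared by four cells expresses the sign of each
cell (`1` or `-1` according to its diagonal) as a product of two colours, up to a sign depending on
the position of the cell. Multiplying these expressions shows that the contiguous `2 × 2` minors of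
the array of signs vanish. Since rows and columns are intervals, the sign of the cell `(x, y)` then
factors as `α x * β y`, and colouring `(x, y)` modulo `3` with horizontal increments `α x` and
vertical increments `β y` is proper.

Conversely, let `Cᵢ` list the vertices of colour `i`. In the word `C₀ C₁ C₂ C₀ C₁ C₂` any two
vertices of different colours alternate. For each nonadjacent pair this word can be perturbed so
that the alternation of this pair is destroyed while all other differently coloured pairs still
appear as `uvuv`; the concatenation of these words represents the graph.
-/

section Alternation

variable {V : Type*} [DecidableEq V] {w : List V} {a b : V}

theorem filter_eq_or_comm (w : List V) (a b : V) :
    w.filter (fun z => z = a ∨ z = b) = w.filter (fun z => z = b ∨ z = a) := by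
  simp only [or_comm]

theorem alternate_iff_isChain :
    Alternate w a b ↔ (w.filter (fun z => z = a ∨ z = b)).IsChain (· ≠ ·) :=
  .rfl

theorem alternate_comm : Alternate w a b ↔ Alternate w b a := by
  rw [alternate_iff_isChain, alternate_iff_isChain, filter_eq_or_comm]

/-- The number of occurrences of the letter `a` among the first `k` letters of `w`, as an integer
because differences of such counts are what alternation constrains. -/
def prefixCount (w : List V) (a : V) (k : ℕ) : ℤ := (w.take k).count a

@[simp]
theorem prefixCount_zero : prefixCount w a 0 = 0 := by simp [prefixCount]

@[simp]
theorem prefixCount_cons_succ (z : V) (l : List V) (a : V) (k : ℕ) :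
    prefixCount (z :: l) a (k + 1) = prefixCount l a k + if z = a then 1 else 0 := by
  simp only [prefixCount, List.take_succ_cons, List.count_cons, beq_iff_eq]
  split_ifs <;> simp

theorem eq_of_prefixCount_eq (ha : a ∈ w) (h : prefixCount w a = prefixCount w b) : a = b := by
  obtain ⟨s, t, rfl⟩ := List.append_of_mem ha
  have before : s.count a = s.count b := by simpa [prefixCount] using congrFun h s.length
  have after : (s.count a : ℤ) + 1 = s.count b + if a = b then 1 else 0 := by
    simpa [prefixCount, List.take_append, List.take_of_length_le (Nat.le_succ s.length),
      List.count_singleton] using congrFun h (s.length + 1)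
  grind

theorem isChain_cons_filter_iff (l : List V) (hab : a ≠ b) :
    (b :: l.filter (fun z => z = a ∨ z = b)).IsChain (· ≠ ·) ↔
      ∀ k, prefixCount l b k ≤ prefixCount l a k ∧ prefixCount l a k ≤ prefixCount l b k + 1 := by
  induction l generalizing a b with
  | nil => simp [prefixCount]
  | cons z l ih =>
    rw [← Nat.and_forall_add_one]
    simp only [prefixCount_zero, prefixCount_cons_succ, le_refl, zero_add, zero_le_one, and_self,
      true_and]
    by_cases hza : z = a
    · subst hza
      rw [List.filter_cons_of_pos (by simp), List.isChain_cons_cons, filter_eq_or_comm,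
        ih hab.symm]
      simp only [hab.symm, hab, if_true, if_false, ne_eq, not_false_eq_true, true_and]
      exact forall_congr' fun k => by omega
    by_cases hzb : z = b
    · subst hzb
      rw [List.filter_cons_of_pos (by simp), List.isChain_cons_cons]
      refine iff_of_false (fun h => h.1 rfl) fun h => ?_
      simpa [hza] using h 0
    · rw [List.filter_cons_of_neg (by simp [hza, hzb]), ih hab]
      simp [hza, hzb]

theorem alternate_iff_isChain_cons (hab : a ≠ b) :
    Alternate w a b ↔ (b :: w.filter (fun z => z = a ∨ z = b)).IsChain (· ≠ ·) ∨
      (a :: w.filter (fun z => z = a ∨ z = b)).IsChain (· ≠ ·) := by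
  refine ⟨fun h => ?_, fun h => h.elim List.IsChain.tail List.IsChain.tail⟩
  have hmem {z : V} (hz : z ∈ w.filter (fun z => z = a ∨ z = b)) : z = a ∨ z = b := by
    simpa using (List.mem_filter.1 hz).2
  rcases hw : w.filter (fun z => z = a ∨ z = b) with _ | ⟨z, m⟩
  · simp
  · rw [alternate_iff_isChain, hw] at h
    simp only [List.isChain_cons_cons]
    rcases hmem (hw ▸ List.mem_cons_self) with rfl | rfl
    · exact .inl ⟨hab.symm, h⟩
    · exact .inr ⟨hab, h⟩

theorem alternate_iff (hab : a ≠ b) :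
    Alternate w a b ↔ ∃ c : ℤ, ∀ k,
      c ≤ prefixCount w a k - prefixCount w b k ∧
        prefixCount w a k - prefixCount w b k ≤ c + 1 := by
  rw [alternate_iff_isChain_cons hab, isChain_cons_filter_iff w hab, filter_eq_or_comm,
    isChain_cons_filter_iff w hab.symm]
  constructor
  · rintro (h | h)
    · exact ⟨0, fun k => by have := h k; omega⟩
    · exact ⟨-1, fun k => by have := h k; omega⟩
  · rintro ⟨c, h⟩
    have h0 := h 0
    simp only [prefixCount_zero] at h0
    obtain rfl | rfl : c = 0 ∨ c = -1 := by omega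
    · exact .inl fun k => by have := h k; omega
    · exact .inr fun k => by have := h k; omega

theorem alternate_iff_comparable {n : ℕ → ℤ} {s t : ℤ} (hab : a ≠ b)
    (ha : ∀ k, n k - 1 ≤ prefixCount w a k + s ∧ prefixCount w a k + s ≤ n k)
    (hb : ∀ k, n k - 1 ≤ prefixCount w b k + t ∧ prefixCount w b k + t ≤ n k) :
    Alternate w a b ↔
      (∀ k, prefixCount w a k + s ≤ prefixCount w b k + t) ∨
        ∀ k, prefixCount w b k + t ≤ prefixCount w a k + s := by
  rw [alternate_iff hab]
  constructor
  · rintro ⟨c, hc⟩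
    rcases lt_or_ge (c + s) t with h | h
    · exact .inl fun k => by have := hc k; omega
    · exact .inr fun k => by have := hc k; omega
  · rintro (h | h)
    · exact ⟨t - s - 1, fun k => by have := h k; have := ha k; have := hb k; omega⟩
    · exact ⟨t - s, fun k => by have := h k; have := ha k; have := hb k; omega⟩

end Alternation

section Comparability

variable {V : Type*} {G : SimpleGraph V}

/-- A graph is a comparability graph if its vertices can be partially ordered so that the edges
are exactly the pairs of distinct comparable vertices. -/
def IsComparabilityGraph (G : SimpleGraph V) : Prop :=
  ∃ _ : PartialOrder V, ∀ a b, G.Adj a b ↔ a < b ∨ b < a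

-- In a triangle-free comparability graph there are no chains `a < b < c`, so every edge runs from a
-- minimal vertex to one that is not minimal.
theorem IsComparabilityGraph.isBipartite (h : IsComparabilityGraph G) (hfree : G.CliqueFree 3) :
    G.IsBipartite := by
  obtain ⟨_, hadj⟩ := h
  have no_chain {a b c : V} (hab : a < b) (hbc : b < c) : False := by
    classical
    exact hfree {a, b, c} <| SimpleGraph.is3Clique_triple_iff.2
      ⟨(hadj _ _).2 (.inl hab), (hadj _ _).2 (.inl (hab.trans hbc)), (hadj _ _).2 (.inl hbc)⟩
  refine (SimpleGraph.Coloring.mk (fun v => (IsMin v : Prop)) ?_).colorable.mono (by simp)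
  have not_isMin_iff {a b : V} (hab : a < b) : IsMin a ∧ ¬ IsMin b :=
    ⟨isMin_iff_forall_not_lt.2 fun u hu => no_chain hu hab, not_isMin_of_lt hab⟩
  intro a b hab heq
  rcases (hadj a b).1 hab with h | h
  · exact (not_isMin_iff h).2 (heq ▸ (not_isMin_iff h).1)
  · exact (not_isMin_iff h).2 (heq ▸ (not_isMin_iff h).1)

theorem WordRepresentable.isComparabilityGraph_induce_neighborSet [DecidableEq V]
    (hw : WordRepresentable G) (v : V) : IsComparabilityGraph (G.induce (G.neighborSet v)) := by
  obtain ⟨w, hmem, halt⟩ := hw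
  have near : ∀ a : G.neighborSet v, ∃ s : ℤ, ∀ k,
      prefixCount w v k - 1 ≤ prefixCount w a k + s ∧
        prefixCount w a k + s ≤ prefixCount w v k := by
    rintro ⟨a, ha : G.Adj v a⟩
    obtain ⟨c, hc⟩ := (alternate_iff ha.ne).1 ((halt v a ha.ne).2 ha)
    exact ⟨c, fun k => by have := hc k; dsimp only; omega⟩
  choose s hs using near
  let F (a : G.neighborSet v) (k : ℕ) : ℤ := prefixCount w a k + s a
  have hF : F.Injective := by
    intro a b hab
    have h0 : s a = s b := by simpa [F] using congrFun hab 0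
    exact Subtype.ext <| eq_of_prefixCount_eq (hmem a) <| funext fun k => by
      simpa [F, h0] using congrFun hab k
  let _ := PartialOrder.lift F hF
  refine ⟨inferInstance, fun a b => ?_⟩
  rcases eq_or_ne a b with rfl | hab
  · simp
  have hab' : (a : V) ≠ b := Subtype.coe_ne_coe.2 hab
  rw [SimpleGraph.comap_adj, lt_iff_le_and_ne, lt_iff_le_and_ne, and_iff_left hab,
    and_iff_left hab.symm]
  exact (halt a b hab').symm.trans (alternate_iff_comparable hab' (hs a) (hs b))

theorem WordRepresentable.isBipartite_induce_neighborSet [DecidableEq V]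
    (hw : WordRepresentable G) (hfree : G.CliqueFree 4) (v : V) :
    (G.induce (G.neighborSet v)).IsBipartite := by
  refine (hw.isComparabilityGraph_induce_neighborSet v).isBipartite ?_
  rw [SimpleGraph.cliqueFree_induce_iff, ← Set.univ_inter (G.neighborSet v)]
  exact ((G.cliqueFreeOn_univ).2 hfree).of_succ _ (Set.mem_univ v)

end Comparability

section Triangulation

variable {P : Finset (ℤ × ℤ)} {t : ℤ × ℤ → Bool} {p q : ℤ × ℤ} {x y : ℤ}

/-- The triangulation as a graph on the whole integer grid, in which the points that are not
lattice points of the polyomino are isolated. -/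
def planeTri (P : Finset (ℤ × ℤ)) (t : ℤ × ℤ → Bool) : SimpleGraph (ℤ × ℤ) :=
  SimpleGraph.fromRel (triRel P t)

theorem planeTri_adj_diag_iff :
    (planeTri P t).Adj (x, y) (x + 1, y + 1) ↔ (x, y) ∈ P ∧ t (x, y) = true := by
  simp only [planeTri, triRel, SimpleGraph.fromRel_adj, ne_eq, Prod.mk.injEq]
  grind

theorem planeTri_adj_antidiag_iff :
    (planeTri P t).Adj (x + 1, y) (x, y + 1) ↔ (x, y) ∈ P ∧ t (x, y) = false := by
  simp only [planeTri, triRel, SimpleGraph.fromRel_adj, ne_eq, Prod.mk.injEq]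
  grind

theorem planeTri_adj_bottom (h : (x, y) ∈ P) : (planeTri P t).Adj (x, y) (x + 1, y) := by
  simp [planeTri, triRel, h]

theorem planeTri_adj_top (h : (x, y) ∈ P) : (planeTri P t).Adj (x, y + 1) (x + 1, y + 1) := by
  simp [planeTri, triRel, h]

theorem planeTri_adj_left (h : (x, y) ∈ P) : (planeTri P t).Adj (x, y) (x, y + 1) := by
  simp [planeTri, triRel, h]

theorem planeTri_adj_right (h : (x, y) ∈ P) : (planeTri P t).Adj (x + 1, y) (x + 1, y + 1) := by
  simp [planeTri, triRel, h]

theorem le_add_one_of_planeTri_adj (h : (planeTri P t).Adj p q) :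
    q.1 ≤ p.1 + 1 ∧ q.2 ≤ p.2 + 1 := by
  obtain ⟨-, h⟩ := (SimpleGraph.fromRel_adj _ _ _).1 h
  simp only [triRel] at h
  grind

theorem mem_latticePts_of_planeTri_adj (h : (planeTri P t).Adj p q) : p ∈ latticePts P := by
  obtain ⟨-, h⟩ := (SimpleGraph.fromRel_adj _ _ _).1 h
  simp only [triRel, latticePts, Set.mem_ofPred_eq] at h ⊢
  grind

theorem finite_latticePts (P : Finset (ℤ × ℤ)) : (latticePts P).Finite := by
  have : latticePts P = ⋃ c ∈ P,
      {c, (c.1 + 1, c.2), (c.1, c.2 + 1), (c.1 + 1, c.2 + 1)} := by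
    ext p; simp [latticePts]
  rw [this]
  exact P.finite_toSet.biUnion fun c _ => Set.toFinite _

-- A clique fits into a unit square, and only one diagonal of that square can be an edge.
theorem planeTri_cliqueFree_four (P : Finset (ℤ × ℤ)) (t : ℤ × ℤ → Bool) :
    (planeTri P t).CliqueFree 4 := by
  intro s hs
  have hne : s.Nonempty := Finset.card_pos.1 (by simp [hs.card_eq])
  obtain ⟨a, ha, hax⟩ := s.exists_min_image Prod.fst hne
  obtain ⟨b, hb, hby⟩ := s.exists_min_image Prod.snd hne
  have near {p q : ℤ × ℤ} (hp : p ∈ s) (hq : q ∈ s) : q.1 ≤ p.1 + 1 ∧ q.2 ≤ p.2 + 1 := by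
    rcases eq_or_ne p q with rfl | hpq
    · omega
    · exact le_add_one_of_planeTri_adj (hs.isClique hp hq hpq)
  let square : Finset (ℤ × ℤ) := {a.1, a.1 + 1} ×ˢ {b.2, b.2 + 1}
  have hsub : s ⊆ square := fun q hq => by
    have := hax q hq
    have := hby q hq
    have := near ha hq
    have := near hb hq
    simp only [square, Finset.mem_product, Finset.mem_insert, Finset.mem_singleton]
    omega
  have hsquare : s = square :=
    Finset.eq_of_subset_of_card_le hsub (by simp [square, hs.card_eq])
  have adj {p q : ℤ × ℤ} (hp : p ∈ square) (hq : q ∈ square) (hpq : p ≠ q) :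
      (planeTri P t).Adj p q :=
    hs.isClique (hsquare ▸ hp) (hsquare ▸ hq) hpq
  have hdiag := planeTri_adj_diag_iff.1 <|
    adj (p := (a.1, b.2)) (q := (a.1 + 1, b.2 + 1)) (by simp [square]) (by simp [square]) (by simp)
  have hantidiag := planeTri_adj_antidiag_iff.1 <|
    adj (p := (a.1 + 1, b.2)) (q := (a.1, b.2 + 1)) (by simp [square]) (by simp [square]) (by simp)
  simp [hdiag.2] at hantidiag

theorem polyTri_cliqueFree_four (P : Finset (ℤ × ℤ)) (t : ℤ × ℤ → Bool) :
    (polyTri P t).CliqueFree 4 :=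
  (planeTri_cliqueFree_four P t).comap
    ⟨(SimpleGraph.Embedding.induce _).toCopy⟩

theorem isBipartite_planeTri_neighborSet (hw : WordRepresentable (polyTri P t))
    (hp : p ∈ latticePts P) :
    ((planeTri P t).induce ((planeTri P t).neighborSet p)).IsBipartite := by
  refine (hw.isBipartite_induce_neighborSet (polyTri_cliqueFree_four P t) ⟨p, hp⟩).of_hom
    ⟨fun q => ⟨⟨q, mem_latticePts_of_planeTri_adj q.2.symm⟩, q.2⟩, fun h => h⟩

end Triangulation

section RimColoring

variable {V : Type*} {G : SimpleGraph V} {o p q r : V} {κ : V → ℤˣ}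

/-- A colouring by signs of the neighbours of the vertex `o` such that adjacent neighbours get
opposite signs. The values of `κ` at other vertices are irrelevant. -/
def IsRimColoring (G : SimpleGraph V) (o : V) (κ : V → ℤˣ) : Prop :=
  ∀ ⦃p q⦄, G.Adj o p → G.Adj o q → G.Adj p q → κ p = -κ q

theorem exists_isRimColoring (h : (G.induce (G.neighborSet o)).IsBipartite) :
    ∃ κ, IsRimColoring G o κ := by
  classical
  let C : (G.induce (G.neighborSet o)).Coloring ℤˣ := h.toColoring (by simp)
  refine ⟨fun p => if hp : p ∈ G.neighborSet o then C ⟨p, hp⟩ else 1, fun p q hp hq hpq => ?_⟩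
  rw [← G.mem_neighborSet] at hp hq
  simp only [dif_pos hp, dif_pos hq]
  exact Int.units_ne_iff_eq_neg.1 (C.valid hpq)

namespace IsRimColoring

theorem mul_eq_neg_one (h : IsRimColoring G o κ) (hp : G.Adj o p) (hq : G.Adj o q)
    (hpq : G.Adj p q) : κ p * κ q = -1 := by
  rw [h hp hq hpq, neg_mul, Int.units_mul_self]

theorem mul_eq_one (h : IsRimColoring G o κ) (hp : G.Adj o p) (hq : G.Adj o q)
    (hr : G.Adj o r) (hpr : G.Adj p r) (hqr : G.Adj q r) : κ p * κ q = 1 := by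
  rw [h hp hr hpr, h hq hr hqr, neg_mul_neg, Int.units_mul_self]

end IsRimColoring

end RimColoring

section CellSign

variable {P : Finset (ℤ × ℤ)} {t : ℤ × ℤ → Bool} {x y : ℤ} {κ : ℤ × ℤ → ℤˣ}

/-- The diagonals of the cells as signs: `1` for the diagonal of slope `1` and `-1` for the other
one. -/
def cellSign (t : ℤ × ℤ → Bool) (c : ℤ × ℤ) : ℤˣ :=
  if t c then 1 else -1

namespace IsRimColoring

theorem cellSign_eq_of_bottomLeft (h : IsRimColoring (planeTri P t) (x, y) κ) (hc : (x, y) ∈ P) :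
    cellSign t (x, y) = κ (x + 1, y) * κ (x, y + 1) := by
  have hp := planeTri_adj_bottom (t := t) hc
  have hq := planeTri_adj_left (t := t) hc
  cases ht : t (x, y)
  · simp [cellSign, ht, h.mul_eq_neg_one hp hq (planeTri_adj_antidiag_iff.2 ⟨hc, ht⟩)]
  · simp [cellSign, ht, h.mul_eq_one hp hq (planeTri_adj_diag_iff.2 ⟨hc, ht⟩)
      (planeTri_adj_right hc) (planeTri_adj_top hc)]

theorem cellSign_eq_of_topRight (h : IsRimColoring (planeTri P t) (x + 1, y + 1) κ)
    (hc : (x, y) ∈ P) : cellSign t (x, y) = κ (x, y + 1) * κ (x + 1, y) := by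
  have hp := (planeTri_adj_top (t := t) hc).symm
  have hq := (planeTri_adj_right (t := t) hc).symm
  cases ht : t (x, y)
  · simp [cellSign, ht, h.mul_eq_neg_one hp hq (planeTri_adj_antidiag_iff.2 ⟨hc, ht⟩).symm]
  · simp [cellSign, ht, h.mul_eq_one hp hq (planeTri_adj_diag_iff.2 ⟨hc, ht⟩).symm
      (planeTri_adj_left hc).symm (planeTri_adj_bottom hc).symm]

theorem cellSign_eq_of_bottomRight (h : IsRimColoring (planeTri P t) (x + 1, y) κ)
    (hc : (x, y) ∈ P) : cellSign t (x, y) = -(κ (x, y) * κ (x + 1, y + 1)) := by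
  have hp := (planeTri_adj_bottom (t := t) hc).symm
  have hq := planeTri_adj_right (t := t) hc
  cases ht : t (x, y)
  · simp [cellSign, ht, h.mul_eq_one hp hq (planeTri_adj_antidiag_iff.2 ⟨hc, ht⟩)
      (planeTri_adj_left hc) (planeTri_adj_top hc).symm]
  · simp [cellSign, ht, h.mul_eq_neg_one hp hq (planeTri_adj_diag_iff.2 ⟨hc, ht⟩)]

theorem cellSign_eq_of_topLeft (h : IsRimColoring (planeTri P t) (x, y + 1) κ)
    (hc : (x, y) ∈ P) : cellSign t (x, y) = -(κ (x, y) * κ (x + 1, y + 1)) := by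
  have hp := (planeTri_adj_left (t := t) hc).symm
  have hq := planeTri_adj_top (t := t) hc
  cases ht : t (x, y)
  · simp [cellSign, ht, h.mul_eq_one hp hq (planeTri_adj_antidiag_iff.2 ⟨hc, ht⟩).symm
      (planeTri_adj_bottom hc) (planeTri_adj_right hc).symm]
  · simp [cellSign, ht, h.mul_eq_neg_one hp hq (planeTri_adj_diag_iff.2 ⟨hc, ht⟩)]

end IsRimColoring

-- Each of the four outer neighbours of the common corner enters the signs of two of the cells.
theorem WordRepresentable.cellSign_mul_cellSign (hw : WordRepresentable (polyTri P t))
    (hsw : (x, y) ∈ P) (hse : (x + 1, y) ∈ P) (hnw : (x, y + 1) ∈ P)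
    (hne : (x + 1, y + 1) ∈ P) :
    cellSign t (x, y) * cellSign t (x + 1, y + 1) =
      cellSign t (x + 1, y) * cellSign t (x, y + 1) := by
  obtain ⟨κ, hκ⟩ := exists_isRimColoring (isBipartite_planeTri_neighborSet hw
    (mem_latticePts_of_planeTri_adj (planeTri_adj_bottom (t := t) hne)))
  rw [hκ.cellSign_eq_of_topRight hsw, hκ.cellSign_eq_of_bottomLeft hne,
    hκ.cellSign_eq_of_topLeft hse, hκ.cellSign_eq_of_bottomRight hnw, neg_mul_neg]
  ac_rfl

end CellSign

section Splitting

theorem exists_eq_of_succ_eq {M : Type*} [Nonempty M] {s : Set ℤ} (hs : s.OrdConnected)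
    {f : ℤ → M} (hf : ∀ x, x ∈ s → x + 1 ∈ s → f (x + 1) = f x) : ∃ m, ∀ x ∈ s, f x = m := by
  have eq_of_le {x y : ℤ} (hx : x ∈ s) (hxy : x ≤ y) : y ∈ s → f y = f x := by
    induction y, hxy using Int.leInduction with
    | base => exact fun _ => rfl
    | succ y hxy ih =>
      intro hy
      have hy' : y ∈ s := hs.out hx hy ⟨hxy, by omega⟩
      rw [hf y hy' hy, ih hy']
  rcases s.eq_empty_or_nonempty with rfl | ⟨a, ha⟩
  · simp
  refine ⟨f a, fun x hx => ?_⟩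
  rcases le_total a x with h | h
  · exact eq_of_le ha h hx
  · exact (eq_of_le hx h ha).symm

@[to_additive]
theorem exists_succ_eq_mul {M : Type*} [CommGroup M] (d : ℤ → M) :
    ∃ F : ℤ → M, ∀ n, F (n + 1) = F n * d n := by
  refine ⟨fun n => (∏ i ∈ Finset.Ico 0 n, d i) / ∏ i ∈ Finset.Ico n 0, d i, fun n => ?_⟩
  dsimp only
  rcases le_or_gt 0 n with h | h
  · rw [← Finset.insert_Ico_right_eq_Ico_add_one h, Finset.prod_insert (by simp),
      Finset.Ico_eq_empty_of_le h, Finset.Ico_eq_empty_of_le (by omega : 0 ≤ n + 1)]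
    simp [mul_comm]
  · rw [← Finset.insert_Ico_add_one_left_eq_Ico h, Finset.prod_insert (by simp),
      Finset.Ico_eq_empty_of_le h.le, Finset.Ico_eq_empty_of_le (by omega : n + 1 ≤ 0)]
    simp

theorem exists_eq_mul_of_minors {M : Type*} [CommGroup M] {P : Set (ℤ × ℤ)} {τ : ℤ × ℤ → M}
    (hcol : ∀ x, {y | (x, y) ∈ P}.OrdConnected) (hrow : ∀ y, {x | (x, y) ∈ P}.OrdConnected)
    (hminor : ∀ x y, (x, y) ∈ P → (x + 1, y) ∈ P → (x, y + 1) ∈ P → (x + 1, y + 1) ∈ P →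
      τ (x, y) * τ (x + 1, y + 1) = τ (x + 1, y) * τ (x, y + 1)) :
    ∃ α β : ℤ → M, ∀ x y, (x, y) ∈ P → τ (x, y) = α x * β y := by
  have row_ratio (y : ℤ) :
      ∃ d, ∀ x ∈ {x | (x, y) ∈ P} ∩ {x | (x, y + 1) ∈ P}, τ (x, y + 1) / τ (x, y) = d := by
    refine exists_eq_of_succ_eq ((hrow y).inter (hrow (y + 1))) fun x hx hx' => ?_
    rw [div_eq_div_iff_mul_eq_mul, mul_comm, hminor x y hx.1 hx'.1 hx.2 hx'.2, mul_comm]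
  choose d hd using row_ratio
  obtain ⟨β, hβ⟩ := exists_succ_eq_mul d
  have col_ratio (x : ℤ) : ∃ m, ∀ y ∈ {y | (x, y) ∈ P}, τ (x, y) / β y = m := by
    refine exists_eq_of_succ_eq (hcol x) fun y hy hy' => ?_
    rw [hβ, ← hd y x ⟨hy, hy'⟩, div_mul_eq_div_div_swap, div_div_cancel]
  choose α hα using col_ratio
  exact ⟨α, β, fun x y h => div_eq_iff_eq_mul.1 (hα x y h)⟩

end Splitting

-- The factors of the splitting, read modulo `3`, are the increments of the colour along horizontal
-- and vertical edges.
theorem polyTri_colorable_three_of_cellSign_eq_mul {P : Finset (ℤ × ℤ)} {t : ℤ × ℤ → Bool}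
    {α β : ℤ → ℤˣ} (h : ∀ x y, (x, y) ∈ P → cellSign t (x, y) = α x * β y) :
    (polyTri P t).Colorable 3 := by
  let ε (u : ℤˣ) : ZMod 3 := (u : ℤ)
  obtain ⟨A, hA⟩ := exists_succ_eq_add fun x => ε (α x)
  obtain ⟨B, hB⟩ := exists_succ_eq_add fun y => ε (β y)
  have ε_ne_zero (u : ℤˣ) : ε u ≠ 0 := by revert u; decide
  have ε_add_ne_zero {u v : ℤˣ} (huv : 1 = u * v) : ε u + ε v ≠ 0 := by revert u v; decide
  have ε_ne {u v : ℤˣ} (huv : -1 = u * v) : ε u ≠ ε v := by revert u v; decide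
  have proper (p q : ℤ × ℤ) (hpq : triRel P t p q) : A p.1 + B p.2 ≠ A q.1 + B q.2 := by
    obtain ⟨rfl, -⟩ | ⟨rfl, -⟩ | ⟨⟨x, y⟩, hc, ⟨ht, rfl, rfl⟩ | ⟨ht, rfl, rfl⟩⟩ := hpq <;>
      simp only [hA, hB] <;> intro heq
    · exact ε_ne_zero (α p.1) (by linear_combination -heq)
    · exact ε_ne_zero (β p.2) (by linear_combination -heq)
    · have := h x y hc
      rw [cellSign, if_pos ht] at this
      exact ε_add_ne_zero this (by linear_combination -heq)
    · have := h x y hc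
      rw [cellSign, if_neg (by simp [ht])] at this
      exact ε_ne this (by linear_combination heq)
  refine (SimpleGraph.Coloring.mk (fun p : latticePts P => A p.1.1 + B p.1.2) ?_).colorable
  rintro p q ⟨-, hpq | hpq⟩
  · exact proper _ _ hpq
  · exact (proper _ _ hpq).symm

theorem WordRepresentable.polyTri_colorable_three {P : Finset (ℤ × ℤ)} {t : ℤ × ℤ → Bool}
    (hw : WordRepresentable (polyTri P t))
    (hcol : ∀ x, {y | (x, y) ∈ P}.OrdConnected) (hrow : ∀ y, {x | (x, y) ∈ P}.OrdConnected) :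
    (polyTri P t).Colorable 3 := by
  obtain ⟨α, β, h⟩ := exists_eq_mul_of_minors (P := P) hcol hrow
    fun _ _ hsw hse hnw hne => hw.cellSign_mul_cellSign hsw hse hnw hne
  exact polyTri_colorable_three_of_cellSign_eq_mul h

theorem sortedLT_quad_iff {α : Type*} [Preorder α] {a b c d : α} :
    [a, b, c, d].SortedLT ↔ a < b ∧ b < c ∧ c < d := by
  simp [List.sortedLT_iff_isChain]

-- Without perturbation the times below spell `C₀ C₁ C₂ C₀ C₁ C₂` with `Cᵢ` the class of colour `i`.
theorem exists_times {V : Type*} {x y : V} {c : V → ℕ} (hc : ∀ z, c z < 3) (hxy : c x ≤ c y) :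
    ∃ time : V × Bool → ℤ,
      (∀ u v, c u < c v → (u, v) ≠ (x, y) →
        ([(u, false), (v, false), (u, true), (v, true)].map time).SortedLT) ∧
      (x ≠ y →
        ([(x, false), (y, false), (y, true), (x, true)].map time).SortedLT ∨
        ([(y, false), (x, false), (x, true), (y, true)].map time).SortedLT ∨
        ([(x, false), (x, true), (y, false), (y, true)].map time).SortedLT) := by
  classical
  simp only [List.map_cons, List.map_nil, sortedLT_quad_iff]
  have := hc y
  obtain h | h | ⟨hx, hy⟩ : c y = c x ∨ c y = c x + 1 ∨ c x = 0 ∧ c y = 2 := by omega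
  · refine ⟨fun
      | (z, false) => 4 * c z - if z = x then 1 else 0
      | (z, true) => 4 * c z + 12 + if z = x then 1 else 0,
      fun u v huv _ => ?_, fun hne => .inl ?_⟩
    · grind
    · grind
  · refine ⟨fun
      | (z, false) => 4 * c z + if z = x then 2 else if z = y then -3 else 0
      | (z, true) => 4 * c z + 12,
      fun u v huv huvxy => ?_, fun hne => .inr (.inl ?_)⟩
    · grind
    · grind
  · refine ⟨fun
      | (z, false) => 4 * c z + if z = y then 2 else 0
      | (z, true) => 4 * c z + 12 - if z = x then 3 else 0,
      fun u v huv huvxy => ?_, fun hne => .inr (.inr ?_)⟩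
    · grind
    · grind

section WordOfTimes

variable {V ι : Type*} [Fintype V] [Fintype ι]

/-- The word over `V` in which the letter `v` occurs once at each time `time (v, i)`, ties being
broken arbitrarily. -/
noncomputable def wordOfTimes (time : V × ι → ℤ) : List V :=
  (Finset.univ.toList.mergeSort fun p q => decide (time p ≤ time q)).map Prod.fst

theorem mem_wordOfTimes [Nonempty ι] (time : V × ι → ℤ) (v : V) : v ∈ wordOfTimes time := by
  simp [wordOfTimes]

theorem filter_wordOfTimes [DecidableEq V] {u v : V} {time : V × ι → ℤ} {M : List (V × ι)}
    (hsorted : (M.map time).SortedLT) (hmem : ∀ p, p ∈ M ↔ p.1 = u ∨ p.1 = v) :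
    (wordOfTimes time).filter (fun z => z = u ∨ z = v) = M.map Prod.fst := by
  let le (p q : V × ι) : Prop := time p ≤ time q
  set L := (Finset.univ : Finset (V × ι)).toList.mergeSort fun p q => decide (time p ≤ time q)
    with hL
  have hLsorted : L.Pairwise le := by
    simpa [le] using List.pairwise_mergeSort (le := fun p q => decide (time p ≤ time q))
      (by simpa using fun _ _ _ _ _ _ => le_trans) (by simp [le_total])
      (Finset.univ : Finset (V × ι)).toList
  have hMsorted : M.Pairwise le := (List.pairwise_map.1 hsorted.pairwise).imp le_of_lt
  have hperm : List.Perm (L.filter fun p => p.1 = u ∨ p.1 = v) M := by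
    have hLnodup : L.Nodup := (List.mergeSort_perm _ _).nodup_iff.2 (Finset.nodup_toList _)
    rw [List.perm_ext_iff_of_nodup (hLnodup.filter _) (List.Nodup.of_map _ hsorted.nodup)]
    simp [hL, hmem]
  have hantisymm (p q : V × ι) (hp : p ∈ L.filter (fun p => p.1 = u ∨ p.1 = v)) (hq : q ∈ M)
      (hpq : le p q) (hqp : le q p) : p = q :=
    List.inj_on_of_nodup_map hsorted.nodup (hperm.mem_iff.1 hp) hq (le_antisymm hpq hqp)
  rw [wordOfTimes, ← hL, List.filter_map]
  exact congrArg _ (hperm.eq_of_pairwise hantisymm (hLsorted.filter _) hMsorted)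

end WordOfTimes

section Colorable

variable {V : Type*} [DecidableEq V] {u v x y : V} {l m : List V}

/-- The restriction of the word `l` to the letters `u` and `v` is a power of `uv`; unlike
alternation, this property is preserved under concatenation. -/
def RestrictsToPow (u v : V) (l : List V) : Prop :=
  ∃ k, l.filter (fun z => z = u ∨ z = v) = (List.replicate k [u, v]).flatten

namespace RestrictsToPow

theorem append (hl : RestrictsToPow u v l) (hm : RestrictsToPow u v m) :
    RestrictsToPow u v (l ++ m) := by
  obtain ⟨i, hi⟩ := hl
  obtain ⟨j, hj⟩ := hm
  exact ⟨i + j, by rw [List.filter_append, hi, hj, List.replicate_add, List.flatten_append]⟩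

theorem flatMap {ι : Type*} {T : ι → List V} (h : ∀ i, RestrictsToPow u v (T i)) (L : List ι) :
    RestrictsToPow u v (L.flatMap T) := by
  induction L with
  | nil => exact ⟨0, rfl⟩
  | cons i L ih => exact (h i).append ih

theorem alternate (huv : u ≠ v) (h : RestrictsToPow u v l) : Alternate l u v := by
  obtain ⟨k, hk⟩ := h
  rw [alternate_iff_isChain_cons huv, hk]
  left
  clear hk
  induction k with
  | zero => simp
  | succ k ih => simpa [List.replicate_succ, huv, huv.symm] using ih

end RestrictsToPow

theorem Alternate.of_infix (h : Alternate l x y) (hml : m <:+: l) : Alternate m x y :=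
  List.IsChain.infix h (hml.filter _)

theorem exists_word_separating [Finite V] {c : V → ℕ} (hc : ∀ z, c z < 3) (hxy : c x ≤ c y) :
    ∃ l : List V, (∀ v, v ∈ l) ∧ (∀ u v, c u < c v → (u, v) ≠ (x, y) → RestrictsToPow u v l) ∧
      (x ≠ y → ¬ Alternate l x y) := by
  have := Fintype.ofFinite V
  obtain ⟨time, hpow, hbad⟩ := exists_times hc hxy
  refine ⟨wordOfTimes time, mem_wordOfTimes time, fun u v huv hne => ⟨2, ?_⟩, fun hne => ?_⟩
  · rw [filter_wordOfTimes (hpow u v huv hne) (by rintro ⟨z, _ | _⟩ <;> simp [or_comm])]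
    simp [List.replicate_succ]
  · rcases hbad hne with h | h | h <;>
      rw [alternate_iff_isChain, filter_wordOfTimes h (by rintro ⟨z, _ | _⟩ <;> simp [or_comm])] <;>
      simp

theorem wordRepresentable_of_colorable_three [Finite V] {G : SimpleGraph V}
    (h : G.Colorable 3) : WordRepresentable G := by
  classical
  obtain ⟨C⟩ := h
  let c (v : V) : ℕ := C v
  have := Fintype.ofFinite V
  let Nonedge := {p : V × V // c p.1 ≤ c p.2 ∧ ¬ G.Adj p.1 p.2}
  choose T hmem hpow hsep using fun p : Nonedge =>
    exists_word_separating (c := c) (fun v => (C v).isLt) p.2.1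
  -- The pairs `(v, v)` count as nonadjacent, so every letter occurs.
  let w := (Finset.univ : Finset Nonedge).toList.flatMap T
  have adj_of_alternate {x y : V} (hxy : c x ≤ c y) (hne : x ≠ y) (h : Alternate w x y) :
      G.Adj x y := by
    by_contra hadj
    let p : Nonedge := ⟨(x, y), hxy, hadj⟩
    exact hsep p hne (h.of_infix (List.infix_of_mem_flatten (List.mem_map_of_mem (by simp))))
  have alternate_of_adj {x y : V} (hxy : c x < c y) (hadj : G.Adj x y) : Alternate w x y :=
    have hw : RestrictsToPow x y w :=
      .flatMap (fun p => hpow p x y hxy fun h => by cases h; exact p.2.2 hadj) _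
    hw.alternate hadj.ne
  refine ⟨w, fun v => ?_, fun x y hne => ⟨fun h => ?_, fun h => ?_⟩⟩
  · exact List.mem_flatMap.2 ⟨⟨(v, v), le_rfl, G.irrefl⟩, by simp, hmem _ v⟩
  · rcases le_total (c x) (c y) with hle | hle
    · exact adj_of_alternate hle hne h
    · exact (adj_of_alternate hle hne.symm (alternate_comm.1 h)).symm
  · have hc : c x ≠ c y := Fin.val_ne_of_ne (C.valid h)
    rcases hc.lt_or_gt with hlt | hlt
    · exact alternate_of_adj hlt h
    · exact alternate_comm.1 (alternate_of_adj hlt h.symm)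

end Colorable

theorem polyomino_tri_word_representable_iff_three_colorable_general (P : Finset (ℤ × ℤ))
    (hcol : ∀ x, {y | (x, y) ∈ P}.OrdConnected) (hrow : ∀ y, {x | (x, y) ∈ P}.OrdConnected)
    (t : ℤ × ℤ → Bool) :
    WordRepresentable (polyTri P t) ↔ (polyTri P t).Colorable 3 := by
  have := (finite_latticePts P).to_subtype
  exact ⟨fun hw => hw.polyTri_colorable_three hcol hrow, wordRepresentable_of_colorable_three⟩

/-- Any triangulation of the graph associated with a convex polyomino is
word-representable if and only if it is 3-colorable. -/
theorem polyomino_tri_word_representable_iff_three_colorable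
    (P : Finset (ℤ × ℤ)) (hP : IsConvexPolyomino P) (t : ℤ × ℤ → Bool) :
    WordRepresentable (polyTri P t) ↔ (polyTri P t).Colorable 3 :=
  polyomino_tri_word_representable_iff_three_colorable_general P
    (fun x => ⟨fun _ h₁ _ h₂ _ h => hP.2.1 x _ _ _ h₁ h₂ h.1 h.2⟩)
    (fun y => ⟨fun _ h₁ _ h₂ _ h => hP.2.2 y _ _ _ h₁ h₂ h.1 h.2⟩) t
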